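/- Let X ⊆ A⁺ be a recognizable maximal code. If the submonoid X* is completely reducible over ℚ, then X is a bifix code. -/

import Mathlib

namespace Birec

variable {A : Type*}

/-- The left quotient `u⁻¹S = {v | u v ∈ S}`. -/
def leftQuot (S : Set (List A)) (u : List A) : Set (List A) := {v | u ++ v ∈ S}

/-- A language is recognizable iff it has finitely many left quotients (Nerode). -/
def Recognizable (S : Set (List A)) : Prop := (Set.range (leftQuot S)).Finite

/-- The reversal `S̃` of a language. -/
def langRev (S : Set (List A)) : Set (List A) := {w | w.reverse ∈ S}

/-- A recognizable set is recurrent if its minimal automaton (whose states are the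
nonempty left quotients) is strongly connected. -/
def Recurrent (S : Set (List A)) : Prop :=
  Recognizable S ∧
    ∀ u v : List A, (leftQuot S u).Nonempty → (leftQuot S v).Nonempty →
      ∃ w : List A, leftQuot S (u ++ w) = leftQuot S v

/-- A set is birecurrent if it is recurrent together with its reversal. -/
def Birecurrent (S : Set (List A)) : Prop := Recurrent S ∧ Recurrent (langRev S)

/-- A set is dense if every word is a factor of one of its words. -/
def LangDense (S : Set (List A)) : Prop := ∀ v : List A, ∃ u w : List A, u ++ v ++ w ∈ S

end Birec
namespace Birec

variable {A : Type*}

/-- A prefix code: a set of nonempty words, none of which is a proper prefix of another. -/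
def IsPrefixCode (X : Set (List A)) : Prop :=
  [] ∉ X ∧ ∀ x ∈ X, ∀ y ∈ X, x <+: y → x = y

/-- A suffix code: a set of nonempty words, none of which is a proper suffix of another. -/
def IsSuffixCode (X : Set (List A)) : Prop :=
  [] ∉ X ∧ ∀ x ∈ X, ∀ y ∈ X, x <:+ y → x = y

/-- A bifix code is both prefix and suffix. -/
def IsBifixCode (X : Set (List A)) : Prop := IsPrefixCode X ∧ IsSuffixCode X

/-- A code: every word has at most one factorization into words of `X`. -/
def IsCode (X : Set (List A)) : Prop :=
  [] ∉ X ∧ ∀ l m : List (List A), (∀ x ∈ l, x ∈ X) → (∀ x ∈ m, x ∈ X) →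
    l.flatten = m.flatten → l = m

/-- The submonoid `X*` generated by a set of words. -/
def star (X : Set (List A)) : Set (List A) :=
  {w | ∃ l : List (List A), (∀ x ∈ l, x ∈ X) ∧ l.flatten = w}

/-- Product of two languages. -/
def setMul (X Y : Set (List A)) : Set (List A) := {w | ∃ x ∈ X, ∃ y ∈ Y, w = x ++ y}

/-- The proper prefixes of words of `X`. -/
def properPrefixes (X : Set (List A)) : Set (List A) := {p | ∃ x ∈ X, p <+: x ∧ p ≠ x}

/-- The proper suffixes of words of `X`. -/
def properSuffixes (X : Set (List A)) : Set (List A) := {p | ∃ x ∈ X, p <:+ x ∧ p ≠ x}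

def IsMaximalPrefixCode (X : Set (List A)) : Prop :=
  IsPrefixCode X ∧ ∀ Y : Set (List A), IsPrefixCode Y → X ⊆ Y → Y = X

def IsMaximalSuffixCode (X : Set (List A)) : Prop :=
  IsSuffixCode X ∧ ∀ Y : Set (List A), IsSuffixCode Y → X ⊆ Y → Y = X

def IsMaximalBifixCode (X : Set (List A)) : Prop :=
  IsBifixCode X ∧ ∀ Y : Set (List A), IsBifixCode Y → X ⊆ Y → Y = X

def IsMaximalCode (X : Set (List A)) : Prop :=
  IsCode X ∧ ∀ Y : Set (List A), IsCode Y → X ⊆ Y → Y = X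

end Birec
namespace Birec

variable {A : Type*}

/-- The characteristic series of a language, as a function `A* → ℚ`. -/
noncomputable def charFun (S : Set (List A)) : List A → ℚ := S.indicator 1

/-- The shift operator `τ ↦ τ · u`, where `(τ · u)(v) = τ(u v)`; this is the linear
action underlying the syntactic representation. -/
def shiftOp (u : List A) : (List A → ℚ) →ₗ[ℚ] (List A → ℚ) where
  toFun τ := fun v => τ (u ++ v)
  map_add' := fun _ _ => rfl
  map_smul' := fun _ _ => rfl

/-- The syntactic space of a series `σ`: the subspace of `ℚ⟨⟨A⟩⟩` spanned by the
series `σ · u` for `u ∈ A*`. -/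
def synSpace (σ : List A → ℚ) : Submodule ℚ (List A → ℚ) :=
  Submodule.span ℚ (Set.range fun u : List A => shiftOp u σ)

/-- A subspace is invariant if it is stable under all shift operators. -/
def InvariantSub (W : Submodule ℚ (List A → ℚ)) : Prop :=
  ∀ τ ∈ W, ∀ u : List A, shiftOp u τ ∈ W

/-- An invariant subspace is irreducible if it is nonzero and has no nontrivial
invariant subspace. -/
def IrreducibleSub (W : Submodule ℚ (List A → ℚ)) : Prop :=
  W ≠ ⊥ ∧ ∀ W' : Submodule ℚ (List A → ℚ), W' ≤ W → InvariantSub W' → W' = ⊥ ∨ W' = W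

/-- A series is completely reducible if its syntactic space is a direct sum of
invariant irreducible subspaces (equivalently, its syntactic representation is a
direct sum of irreducible representations). -/
def CompletelyReducibleSeries (σ : List A → ℚ) : Prop :=
  ∃ (n : ℕ) (W : Fin n → Submodule ℚ (List A → ℚ)),
    (∀ i, W i ≤ synSpace σ ∧ InvariantSub (W i) ∧ IrreducibleSub (W i)) ∧
    iSupIndep W ∧ (⨆ i, W i) = synSpace σ

/-- A language is completely reducible if its characteristic series is. -/
noncomputable def CompletelyReducibleLang (S : Set (List A)) : Prop :=
  CompletelyReducibleSeries (charFun S)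

/-- The rank of the element `ψ_σ(u)` of the syntactic monoid, i.e. the dimension of the
image of the syntactic space under the shift by `u`. -/
noncomputable def psiRank (σ : List A → ℚ) (u : List A) : ℕ :=
  Module.finrank ℚ ↥(Submodule.map (shiftOp u) (synSpace σ))

/-- `u` induces an element of minimal nonzero rank of the syntactic monoid. -/
def IsMinNonzeroPsiRank (σ : List A → ℚ) (u : List A) : Prop :=
  psiRank σ u ≠ 0 ∧ ∀ v : List A, psiRank σ v ≠ 0 → psiRank σ u ≤ psiRank σ v

/-- The eventual kernel `EK(S)`: the intersection (inside the syntactic space) of the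
kernels of all elements of minimal nonzero rank of the syntactic monoid. -/
noncomputable def EK (S : Set (List A)) : Submodule ℚ (List A → ℚ) :=
  synSpace (charFun S) ⊓
    ⨅ u ∈ {u : List A | IsMinNonzeroPsiRank (charFun S) u}, LinearMap.ker (shiftOp u)

/-- The eventual range `ER(S)`: the subspace spanned by the images of all elements of
minimal nonzero rank of the syntactic monoid. -/
noncomputable def ER (S : Set (List A)) : Submodule ℚ (List A → ℚ) :=
  ⨆ u ∈ {u : List A | IsMinNonzeroPsiRank (charFun S) u},
    Submodule.map (shiftOp u) (synSpace (charFun S))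

end Birec

open Birec

/-!
Since `X` is maximal, `X*` is dense, so every `x ∈ X*` extends to words `u = x p = q x` of `X*` with
`p, q ∈ X*` whose image `e` in a finite monoid `M` recognizing `X*` is a minimal idempotent; then
`eMe` is a group. Write the characteristic series as a function `f` on `M`. Complete reducibility
gives every subrepresentation of the syntactic space an invariant complement, which forces the
averages `∑ f (m g)` and `∑ f (g m)` over `g ∈ eMe` to be independent of `m ∈ M`. As
`f x ≤ f (e x)` and `f x ≤ f (x e)`, equal averages are equal term by term, so `u w u ∈ X*` implies
`w u ∈ X*` and `u w ∈ X*`. Hence if `u w` or `w u` lies in `X*`, both do, and unique factorization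
puts `w` in `X*`. So `X*` is left and right unitary, that is, `X` is bifix.
-/

namespace Birec

section Words

variable {A : Type*} {X : Set (List A)}

/-- A word is unbordered if the whole word is the only nonempty word that is both a prefix and a
suffix of it. Such a word cannot overlap itself, so its occurrences in a product are rigid. -/
def IsUnbordered (y : List A) : Prop :=
  ∀ z, z ≠ [] → z <+: y → z <:+ y → z = y

theorem isUnbordered_singleton (a : A) : IsUnbordered [a] := fun _ hz hpre _ =>
  hpre.eq_of_length_le (List.length_pos_iff.2 hz)

theorem IsUnbordered.eq_of_append_eq_append {y p q r s : List A} (hy : IsUnbordered y)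
    (hp : ¬ y <:+: p) (hq : ¬ y <:+: q) (h : p ++ y ++ r = q ++ y ++ s) : p = q := by
  wlog hle : p.length ≤ q.length generalizing p q r s
  · exact (this hq hp h.symm (le_of_not_ge hle)).symm
  simp only [List.append_assoc] at h
  obtain ⟨c, rfl⟩ : p <+: q :=
    List.prefix_of_prefix_length_le ⟨_, h⟩ (List.prefix_append _ _) hle
  have hcy : y ++ r = c ++ (y ++ s) := by simpa using h
  have hlt : c.length < y.length := by
    by_contra! hge
    have hpre : y <+: c := List.prefix_of_prefix_length_le ⟨r, hcy⟩ (List.prefix_append _ _) hge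
    exact hq (hpre.isInfix.trans (List.suffix_append p c).isInfix)
  obtain ⟨d, rfl⟩ : c <+: y := List.prefix_of_prefix_length_le ⟨_, hcy.symm⟩
    (List.prefix_append _ _) hlt.le
  have hd : d ≠ [] := by rintro rfl; simp at hlt
  have hds : d ++ r = (c ++ d) ++ s := by simpa using hcy
  have hdpre : d <+: c ++ d :=
    List.prefix_of_prefix_length_le ⟨r, hds⟩ (List.prefix_append _ _) (by simp)
  have hc : c = [] := by simpa using hy d hd hdpre (List.suffix_append c d)
  simp [hc]

theorem isUnbordered_append_replicate {a b : A} (hab : b ≠ a) (w : List A) :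
    IsUnbordered (a :: w ++ List.replicate (a :: w).length b) := by
  classical
  rintro z hz hpre hsuf
  obtain ⟨z, rfl⟩ : ∃ z', z = a :: z' := by
    obtain ⟨c, z, rfl⟩ := List.exists_cons_of_ne_nil hz
    exact ⟨z, by rw [(List.cons_prefix_cons.1 hpre).1]⟩
  have hlong : (a :: w).length ≤ (a :: z).length := by
    by_contra! hlt
    have hsufb : a :: z <:+ List.replicate (a :: w).length b :=
      List.suffix_of_suffix_length_le hsuf (List.suffix_append _ _) (by simpa using hlt.le)
    exact hab (List.eq_of_mem_replicate (hsufb.subset List.mem_cons_self)).symm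
  have hprez : a :: w <+: a :: z :=
    List.prefix_of_prefix_length_le (List.prefix_append _ _) hpre hlong
  obtain ⟨t, ht⟩ := hsuf
  -- All occurrences of `a` already lie in `z`, so what precedes `z` cannot begin with `a`.
  have hcount : t.count a = 0 := by
    have hsum := congrArg (List.count a) ht
    have hle := hprez.sublist.count_le a
    rw [List.count_append, List.count_append, List.count_replicate,
      if_neg (by simpa using hab)] at hsum
    omega
  cases t with
  | nil => exact ht
  | cons c t =>
    obtain rfl : c = a := (List.cons_eq_cons.1 ht).1
    simp at hcount

theorem isPrefix_of_length_le [Subsingleton A] {v w : List A} (h : v.length ≤ w.length) :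
    v <+: w := by
  rw [List.prefix_iff_eq_take]
  exact List.ext_getElem (by simpa using h) fun _ _ _ => Subsingleton.elim _ _

theorem nil_mem_star (X : Set (List A)) : [] ∈ star X := ⟨[], by simp, rfl⟩

theorem subset_star (X : Set (List A)) : X ⊆ star X :=
  fun x hx => ⟨[x], by simpa using hx, by simp⟩

theorem append_mem_star {u v : List A} (hu : u ∈ star X) (hv : v ∈ star X) : u ++ v ∈ star X := by
  obtain ⟨l, hl, rfl⟩ := hu
  obtain ⟨m, hm, rfl⟩ := hv
  exact ⟨l ++ m, List.forall_mem_append.2 ⟨hl, hm⟩, List.flatten_append⟩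

theorem flatten_replicate_mem_star {w : List A} (hw : w ∈ star X) (n : ℕ) :
    (List.replicate n w).flatten ∈ star X := by
  induction n with
  | zero => exact nil_mem_star X
  | succ n ih => simpa [List.replicate_succ] using append_mem_star hw ih

theorem append_mem_star_iff {u v : List A} :
    u ++ v ∈ star X ↔ (u ∈ star X ∧ v ∈ star X) ∨
      ∃ p s t r, u = p ++ s ∧ v = t ++ r ∧ p ∈ star X ∧ s ++ t ∈ X ∧ r ∈ star X := by
  constructor
  · rintro ⟨l, hl, h⟩
    rcases List.flatten_eq_append_iff.1 h with
      ⟨a, b, rfl, rfl, rfl⟩ | ⟨a, s, c, t, d, rfl, rfl, rfl⟩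
    · obtain ⟨ha, hb⟩ := List.forall_mem_append.1 hl
      exact Or.inl ⟨⟨a, ha, rfl⟩, ⟨b, hb, rfl⟩⟩
    · obtain ⟨ha, hd⟩ := List.forall_mem_append.1 hl
      obtain ⟨hst, hd⟩ := List.forall_mem_cons.1 hd
      exact Or.inr ⟨a.flatten, s, c :: t, d.flatten, rfl, rfl, ⟨a, ha, rfl⟩, hst, ⟨d, hd, rfl⟩⟩
  · rintro (⟨hu, hv⟩ | ⟨p, s, t, r, rfl, rfl, hp, hst, hr⟩)
    · exact append_mem_star hu hv
    · simpa using append_mem_star hp (append_mem_star (subset_star X hst) hr)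

theorem Recognizable.recognizable_star (h : Recognizable X) : Recognizable (star X) := by
  -- A quotient of `X*` by `u` depends only on whether `u ∈ X*` and on the set of quotients of `X`
  -- by the suffixes `s` left over from the factorizations `u = p s` with `p ∈ X*`.
  let quotOf : Set (Set (List A)) × Prop → Set (List A) := fun K =>
    {v | (K.2 ∧ v ∈ star X) ∨ ∃ L ∈ K.1, ∃ t ∈ L, ∃ r ∈ star X, v = t ++ r}
  refine ((h.powerset.prod (Set.finite_univ (α := Prop))).image quotOf).subset ?_
  rintro _ ⟨u, rfl⟩
  refine ⟨({L | ∃ p s, u = p ++ s ∧ p ∈ star X ∧ leftQuot X s = L}, u ∈ star X),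
    ⟨?_, trivial⟩, ?_⟩
  · rintro _ ⟨p, s, -, -, rfl⟩
    exact ⟨s, rfl⟩
  · ext v
    simp only [quotOf, leftQuot, Set.mem_ofPred_eq, append_mem_star_iff]
    refine or_congr Iff.rfl ⟨?_, ?_⟩
    · rintro ⟨_, ⟨p, s, hu, hp, rfl⟩, t, ht, r, hr, hv⟩
      exact ⟨p, s, t, r, hu, hv, hp, ht, hr⟩
    · rintro ⟨p, s, t, r, hu, hv, hp, ht, hr⟩
      exact ⟨_, ⟨p, s, hu, hp, rfl⟩, t, ht, r, hr, hv⟩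

end Words

section Codes

variable {A : Type*} {X : Set (List A)}

theorem IsCode.mem_star_of_append (hX : IsCode X) {u w : List A} (hu : u ∈ star X)
    (huw : u ++ w ∈ star X) (hwu : w ++ u ∈ star X) : w ∈ star X := by
  obtain ⟨l, hl, rfl⟩ := hu
  obtain ⟨m, hm, hflat_m⟩ := huw
  obtain ⟨n, hn, hflat_n⟩ := hwu
  have hcomm : l ++ n = m ++ l :=
    hX.2 _ _ (List.forall_mem_append.2 ⟨hl, hn⟩) (List.forall_mem_append.2 ⟨hm, hl⟩)
      (by simp [hflat_m, hflat_n])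
  rcases List.append_eq_append_iff.1 hcomm with ⟨c, rfl, rfl⟩ | ⟨c, rfl, -⟩
  · exact ⟨c, (List.forall_mem_append.1 hm).2, by simpa using hflat_m⟩
  · have hnil : c.flatten = [] ∧ w = [] := by simpa using hflat_m
    exact hnil.2 ▸ nil_mem_star X

theorem IsCode.isPrefixCode (hX : IsCode X)
    (hunit : ∀ u ∈ star X, ∀ w, u ++ w ∈ star X → w ∈ star X) : IsPrefixCode X := by
  refine ⟨hX.1, ?_⟩
  rintro x hx _ hxz ⟨z, rfl⟩
  obtain ⟨l, hl, rfl⟩ := hunit x (subset_star X hx) z (subset_star X hxz)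
  have heq : x :: l = [x ++ l.flatten] :=
    hX.2 _ _ (List.forall_mem_cons.2 ⟨hx, hl⟩) (by simpa using hxz) (by simp)
  exact (List.cons_eq_cons.1 heq).1

theorem IsCode.isSuffixCode (hX : IsCode X)
    (hunit : ∀ u ∈ star X, ∀ w, w ++ u ∈ star X → w ∈ star X) : IsSuffixCode X := by
  refine ⟨hX.1, ?_⟩
  rintro x hx _ hzx ⟨z, rfl⟩
  obtain ⟨l, hl, rfl⟩ := hunit x (subset_star X hx) z (subset_star X hzx)
  have heq : l ++ [x] = [] ++ [l.flatten ++ x] :=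
    hX.2 _ _ (List.forall_mem_append.2 ⟨hl, by simpa using hx⟩) (by simpa using hzx) (by simp)
  exact (List.cons_eq_cons.1 (List.append_inj' heq rfl).2).1

theorem exists_eq_append_cons_of_mem_insert {α : Type*} {s : Set α} {y : α} {l : List α}
    (hl : ∀ x ∈ l, x ∈ insert y s) (hy : y ∈ l) :
    ∃ a b, l = a ++ y :: b ∧ (∀ x ∈ a, x ∈ s) ∧ ∀ x ∈ b, x ∈ insert y s := by
  obtain ⟨a, b, rfl, hya⟩ := List.eq_append_cons_of_mem hy
  obtain ⟨ha, hyb⟩ := List.forall_mem_append.1 hl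
  exact ⟨a, b, rfl, fun x hx => (ha x hx).resolve_left fun h => hya (h ▸ hx),
    (List.forall_mem_cons.1 hyb).2⟩

theorem isInfix_flatten_of_mem {y : List A} {l : List (List A)} (hy : y ∈ l) :
    y <:+: l.flatten := by
  obtain ⟨a, b, rfl⟩ := List.append_of_mem hy
  exact ⟨a.flatten, b.flatten, by simp⟩

theorem IsCode.eq_of_flatten_eq_of_isUnbordered (hX : IsCode X) {y : List A}
    (hy : IsUnbordered y) (hfac : ∀ w ∈ star X, ¬ y <:+: w) {l m : List (List A)}
    (hl : ∀ x ∈ l, x ∈ insert y X) (hm : ∀ x ∈ m, x ∈ insert y X)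
    (h : l.flatten = m.flatten) : l = m := by
  have mem_of_notMem : ∀ {k : List (List A)}, (∀ x ∈ k, x ∈ insert y X) → y ∉ k →
      ∀ x ∈ k, x ∈ X := fun hk hyk x hx => (hk x hx).resolve_left fun hxy => hyk (hxy ▸ hx)
  by_cases hyl : y ∈ l <;> by_cases hym : y ∈ m
  · obtain ⟨a, b, rfl, ha, hb⟩ := exists_eq_append_cons_of_mem_insert hl hyl
    obtain ⟨c, d, rfl, hc, hd⟩ := exists_eq_append_cons_of_mem_insert hm hym
    have hflat : a.flatten ++ y ++ b.flatten = c.flatten ++ y ++ d.flatten := by simpa using h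
    have hac : a.flatten = c.flatten :=
      hy.eq_of_append_eq_append (hfac _ ⟨a, ha, rfl⟩) (hfac _ ⟨c, hc, rfl⟩) hflat
    have hbd : b.flatten = d.flatten := by simpa [hac] using hflat
    rw [hX.2 a c ha hc hac, hX.eq_of_flatten_eq_of_isUnbordered hy hfac hb hd hbd]
  · exact absurd (h ▸ isInfix_flatten_of_mem hyl) (hfac _ ⟨m, mem_of_notMem hm hym, rfl⟩)
  · exact absurd (h ▸ isInfix_flatten_of_mem hym) (hfac _ ⟨l, mem_of_notMem hl hyl, rfl⟩)
  · exact hX.2 l m (mem_of_notMem hl hyl) (mem_of_notMem hm hym) h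
termination_by l.length
decreasing_by simp_all; omega

theorem IsMaximalCode.exists_isInfix_of_isUnbordered (hX : IsMaximalCode X) {y : List A}
    (hne : y ≠ []) (hy : IsUnbordered y) : ∃ w ∈ star X, y <:+: w := by
  by_contra! hfac
  have hcode : IsCode (insert y X) :=
    ⟨fun h => h.elim (fun hnil => hne hnil.symm) hX.1.1, fun _ _ hl hm h =>
      hX.1.eq_of_flatten_eq_of_isUnbordered hy hfac hl hm h⟩
  have hyX : y ∈ X := hX.2 _ hcode (Set.subset_insert y X) ▸ Set.mem_insert y X
  exact hfac y (subset_star X hyX) List.infix_rfl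

theorem IsMaximalCode.langDense_star (hX : IsMaximalCode X) : LangDense (star X) := by
  suffices h : ∀ v : List A, ∃ w ∈ star X, v <:+: w by
    intro v
    obtain ⟨_, hw, u, t, rfl⟩ := h v
    exact ⟨u, t, hw⟩
  rintro (_ | ⟨a, v⟩)
  · exact ⟨[], nil_mem_star X, List.infix_rfl⟩
  rcases subsingleton_or_nontrivial A with _ | _
  · obtain ⟨w, hw, haw⟩ :=
      hX.exists_isInfix_of_isUnbordered (List.cons_ne_nil a []) (isUnbordered_singleton a)
    refine ⟨_, flatten_replicate_mem_star hw (a :: v).length,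
      (isPrefix_of_length_le ?_).isInfix⟩
    simpa using Nat.le_mul_of_pos_right (v.length + 1) haw.length_le
  · obtain ⟨b, hb⟩ := exists_ne a
    obtain ⟨w, hw, hvw⟩ :=
      hX.exists_isInfix_of_isUnbordered (by simp) (isUnbordered_append_replicate hb v)
    exact ⟨w, hw, (List.prefix_append _ _).isInfix.trans hvw⟩

end Codes

section FiniteMonoid

variable {M : Type*} [Monoid M]

theorem exists_isIdempotentElem_pow_succ [Finite M] (m : M) :
    ∃ n, IsIdempotentElem (m ^ (n + 1)) := by
  let _ : TopologicalSpace M := ⊥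
  have : DiscreteTopology M := ⟨rfl⟩
  obtain ⟨_, ⟨n, rfl⟩, hn⟩ := exists_idempotent_in_compact_subsemigroup
    (fun _ => continuous_of_discreteTopology) (Set.range fun n => m ^ (n + 1))
    (Set.range_nonempty _) (Set.toFinite _).isCompact (by
      rintro _ ⟨i, rfl⟩ _ ⟨j, rfl⟩
      exact ⟨i + 1 + j, by simp only [← pow_add, add_assoc]⟩)
  exact ⟨n, hn⟩

/-- An idempotent `e` is minimal if its corner `eMe` is a group; only right inverses are required,
since in a monoid they are then two-sided. For finite `M` these are the idempotents of the minimal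
two-sided ideal. -/
def IsMinimalIdempotent (e : M) : Prop :=
  IsIdempotentElem e ∧ ∀ m, ∃ n, e * m * e * n = e

variable (M) in
theorem exists_forall_isMinimalIdempotent [Finite M] :
    ∃ k : M, ∀ a b : M, IsIdempotentElem (a * k * b) → IsMinimalIdempotent (a * k * b) := by
  -- An element generating a right ideal of least cardinality works.
  obtain ⟨k, hk⟩ := Finite.exists_min fun m : M => (Set.range (m * ·)).ncard
  refine ⟨k, fun a b he => ⟨he, fun m => ?_⟩⟩
  generalize hdef : a * k * b = e at he ⊢
  have hcard : (Set.range (e * ·)).ncard ≤ (Set.range (k * ·)).ncard := by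
    refine (Set.ncard_le_ncard ?_ (Set.toFinite _)).trans
      (Set.ncard_image_le (f := (a * ·)) (Set.toFinite _))
    rintro _ ⟨x, rfl⟩
    exact ⟨k * (b * x), ⟨_, rfl⟩, by simp only [← hdef, mul_assoc]⟩
  have hsub : Set.range (e * m * e * ·) ⊆ Set.range (e * ·) := by
    rintro _ ⟨x, rfl⟩
    exact ⟨m * e * x, by simp only [mul_assoc]⟩
  have heq : Set.range (e * m * e * ·) = Set.range (e * ·) :=
    Set.eq_of_subset_of_ncard_le hsub (hcard.trans (hk _)) (Set.toFinite _)
  exact heq.ge ⟨1, mul_one e⟩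

variable (M) in
theorem exists_forall_isMinimalIdempotent_pow_succ [Finite M] :
    ∃ k : M, ∀ a b : M, ∃ n, IsMinimalIdempotent ((a * k * b) ^ (n + 1)) := by
  obtain ⟨k, hk⟩ := exists_forall_isMinimalIdempotent M
  refine ⟨k, fun a b => ?_⟩
  obtain ⟨n, hn⟩ := exists_isIdempotentElem_pow_succ (a * k * b)
  rw [pow_succ', mul_assoc (a * k)] at hn
  exact ⟨n, by rw [pow_succ', mul_assoc (a * k)]; exact hk a _ hn⟩

variable {e : M}

open Subsemigroup (corner mem_corner_iff)

theorem mul_mul_mem_corner {M : Type*} [Semigroup M] (e m : M) : e * m * e ∈ corner e := ⟨m, rfl⟩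

theorem IsMinimalIdempotent.exists_mul_eq (he : IsMinimalIdempotent e) (k : corner e) :
    ∃ n : corner e, (k * n : M) = e := by
  obtain ⟨_, m, rfl⟩ := k
  obtain ⟨n, hn⟩ := he.2 m
  refine ⟨⟨_, mul_mul_mem_corner e n⟩, ?_⟩
  calc e * m * e * (e * n * e) = e * m * (e * e) * n * e := by simp only [mul_assoc]
    _ = e := by rw [he.1.eq, hn, he.1.eq]

theorem IsMinimalIdempotent.mem_corner (he : IsMinimalIdempotent e) : e ∈ corner e :=
  (mem_corner_iff he.1).2 ⟨he.1, he.1⟩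

section Sums

variable {R : Type*} [AddCommMonoid R] [Fintype (corner e)]

theorem IsMinimalIdempotent.sum_mul_right (he : IsMinimalIdempotent e) (f : M → R) (k : corner e) :
    ∑ g : corner e, f (g * k) = ∑ g : corner e, f g := by
  obtain ⟨n, hn⟩ := he.exists_mul_eq k
  have hbij : Function.Bijective fun g : corner e => g * k := by
    refine Finite.injective_iff_bijective.1 fun g h hgh => Subtype.ext ?_
    calc (g : M) = g * k * n := by rw [mul_assoc, hn, ((mem_corner_iff he.1).1 g.2).2]
      _ = h * k * n := congrArg (fun x : corner e => (x : M) * n) hgh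
      _ = h := by rw [mul_assoc, hn, ((mem_corner_iff he.1).1 h.2).2]
  exact hbij.sum_comp fun g => f g

theorem IsMinimalIdempotent.sum_mul_left (he : IsMinimalIdempotent e) (f : M → R) (k : corner e) :
    ∑ g : corner e, f (k * g) = ∑ g : corner e, f g := by
  obtain ⟨n, hn⟩ := he.exists_mul_eq k
  have hbij : Function.Bijective fun g : corner e => k * g := by
    refine Finite.surjective_iff_bijective.1 fun g => ⟨n * g, Subtype.ext ?_⟩
    calc (k * (n * g) : M) = k * n * g := (mul_assoc _ _ _).symm
      _ = g := by rw [hn, ((mem_corner_iff he.1).1 g.2).1]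
  exact hbij.sum_comp fun g => f g

end Sums

/-- The span of the translates `x ↦ f (p e q x)` of `f` by the elements of the two-sided ideal
`MeM`, i.e. the subrepresentation that `MeM` generates from `f`. -/
def idealSpan {R : Type*} [Semiring R] (f : M → R) (e : M) : Submodule R (M → R) :=
  Submodule.span R (Set.range fun p : M × M => fun x => f (p.1 * e * p.2 * x))

section LeftAverages

variable {R : Type*} [Semiring R] {f : M → R}

theorem IsMinimalIdempotent.sum_mul_left_eq_sum_of_mem_idealSpan [Fintype (corner e)]
    (he : IsMinimalIdempotent e) {h : M → R} (hh : h ∈ idealSpan f e) (m : M) :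
    ∑ g : corner e, h (m * g) = ∑ g : corner e, h g := by
  induction hh using Submodule.span_induction with
  | mem h hh =>
    obtain ⟨⟨p, q⟩, rfl⟩ := hh
    have absorb (m : M) : ∑ g : corner e, f (p * e * q * (m * g)) = ∑ g : corner e, f (p * g) := by
      rw [← he.sum_mul_left (fun x => f (p * x)) ⟨_, mul_mul_mem_corner e (q * m)⟩]
      refine Finset.sum_congr rfl fun g _ => congrArg f ?_
      calc p * e * q * (m * g) = p * e * q * (m * (e * g)) := by
            rw [((mem_corner_iff he.1).1 g.2).1]
        _ = p * (e * (q * m) * e * g) := by simp only [mul_assoc]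
    simpa using (absorb m).trans (absorb 1).symm
  | zero => rfl
  | add h k _ _ hh hk => simp only [Pi.add_apply, Finset.sum_add_distrib, hh, hk]
  | smul c h _ hh => simp only [Pi.smul_apply, ← Finset.smul_sum, hh]

theorem IsMinimalIdempotent.sum_mul_left_eq_sum [Fintype (corner e)]
    (he : IsMinimalIdempotent e)
    (hf : ∃ h ∈ idealSpan f e, ∀ m x, f (m * e * x) = h (m * e * x)) (m : M) :
    ∑ g : corner e, f (m * g) = ∑ g : corner e, f g := by
  obtain ⟨h, hh, hfh⟩ := hf
  have eq_sum (m : M) : ∑ g : corner e, f (m * g) = ∑ g : corner e, h g := by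
    rw [← he.sum_mul_left_eq_sum_of_mem_idealSpan hh m]
    refine Finset.sum_congr rfl fun g _ => ?_
    simpa only [mul_assoc, ((mem_corner_iff he.1).1 g.2).1] using hfh m g
  simpa using (eq_sum m).trans (eq_sum 1).symm

variable [PartialOrder R] [IsOrderedCancelAddMonoid R]

theorem IsMinimalIdempotent.apply_mul_mul_eq_of_le_left [Finite (corner e)]
    (he : IsMinimalIdempotent e)
    (hf : ∃ h ∈ idealSpan f e, ∀ m x, f (m * e * x) = h (m * e * x))
    (hle : ∀ x, f x ≤ f (e * x)) (m : M) : f (e * m * e) = f (m * e) := by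
  have := Fintype.ofFinite (corner e)
  have hsum : ∑ g : corner e, f (m * g) = ∑ g : corner e, f (e * (m * g)) := by
    simp only [← mul_assoc, he.sum_mul_left_eq_sum hf]
  have heq := (Finset.sum_eq_sum_iff_of_le fun (g : corner e) _ => hle (m * g)).1 hsum
  simpa only [mul_assoc] using (heq ⟨e, he.mem_corner⟩ (Finset.mem_univ _)).symm

end LeftAverages

section RightAverages

variable {R : Type*} [Ring R] {f : M → R}

theorem IsMinimalIdempotent.sum_mul_right_eq_sum [Fintype (corner e)]
    (he : IsMinimalIdempotent e)
    (hf : ∀ h ∈ idealSpan f e, (∀ m x, h (m * e * x) = 0) → h = 0) (m : M) :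
    ∑ g : corner e, f (g * m) = ∑ g : corner e, f g := by
  have translate_mem (g : corner e) (q : M) : (fun x => f (g * q * x)) ∈ idealSpan f e :=
    Submodule.subset_span ⟨(g, q), by simp only [((mem_corner_iff he.1).1 g.2).2]⟩
  have hzero := hf (∑ g : corner e, ((fun x => f (g * m * x)) - fun x => f (g * 1 * x)))
    (Submodule.sum_mem _ fun g _ => Submodule.sub_mem _ (translate_mem g m) (translate_mem g 1)) ?_
  · simpa [sub_eq_zero] using congrFun hzero 1
  · intro p x
    have absorb (m : M) : ∑ g : corner e, f (g * m * (p * e * x)) = ∑ g : corner e, f (g * x) := by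
      rw [← he.sum_mul_right (fun g => f (g * x)) ⟨_, mul_mul_mem_corner e (m * p)⟩]
      refine Finset.sum_congr rfl fun g _ => congrArg f ?_
      calc g * m * (p * e * x) = g * e * m * (p * e * x) := by
            rw [((mem_corner_iff he.1).1 g.2).2]
        _ = g * (e * (m * p) * e) * x := by simp only [mul_assoc]
    simp only [Finset.sum_apply, Pi.sub_apply, Finset.sum_sub_distrib, absorb, sub_self]

variable [PartialOrder R] [IsOrderedAddMonoid R]

theorem IsMinimalIdempotent.apply_mul_mul_eq_of_le_right [Finite (corner e)]
    (he : IsMinimalIdempotent e)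
    (hf : ∀ h ∈ idealSpan f e, (∀ m x, h (m * e * x) = 0) → h = 0)
    (hle : ∀ x, f x ≤ f (x * e)) (m : M) : f (e * m * e) = f (e * m) := by
  have := Fintype.ofFinite (corner e)
  have hsum : ∑ g : corner e, f (g * m) = ∑ g : corner e, f (g * m * e) := by
    simp only [mul_assoc, he.sum_mul_right_eq_sum hf]
  have heq := (Finset.sum_eq_sum_iff_of_le fun (g : corner e) _ => hle ((g : M) * m)).1 hsum
  exact (heq ⟨e, he.mem_corner⟩ (Finset.mem_univ _)).symm

end RightAverages

end FiniteMonoid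

section CompleteReducibility

variable {A : Type*} {σ : List A → ℚ}

theorem shiftOp_shiftOp (u v : List A) (τ : List A → ℚ) :
    shiftOp v (shiftOp u τ) = shiftOp (u ++ v) τ := by
  funext w
  simp [shiftOp]

theorem invariantSub_span_range {ι : Type*} {τ : ι → List A → ℚ}
    (h : ∀ i u, shiftOp u (τ i) ∈ Submodule.span ℚ (Set.range τ)) :
    InvariantSub (Submodule.span ℚ (Set.range τ)) := fun _ hτ u =>
  (Submodule.span_le (p := (Submodule.span ℚ (Set.range τ)).comap (shiftOp u))).2
    (Set.range_subset_iff.2 fun i => h i u) hτ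

theorem invariantSub_synSpace (σ : List A → ℚ) : InvariantSub (synSpace σ) :=
  invariantSub_span_range fun u v => Submodule.subset_span ⟨u ++ v, (shiftOp_shiftOp u v σ).symm⟩

theorem self_mem_synSpace (σ : List A → ℚ) : σ ∈ synSpace σ := Submodule.subset_span ⟨[], rfl⟩

theorem InvariantSub.inf {W W' : Submodule ℚ (List A → ℚ)} (h : InvariantSub W)
    (h' : InvariantSub W') : InvariantSub (W ⊓ W') :=
  fun τ hτ u => ⟨h τ hτ.1 u, h' τ hτ.2 u⟩

theorem InvariantSub.sup {W W' : Submodule ℚ (List A → ℚ)} (h : InvariantSub W)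
    (h' : InvariantSub W') : InvariantSub (W ⊔ W') := by
  intro τ hτ u
  obtain ⟨w, hw, w', hw', rfl⟩ := Submodule.mem_sup.1 hτ
  exact map_add (shiftOp u) w w' ▸ Submodule.add_mem_sup (h w hw u) (h' w' hw' u)

theorem InvariantSub.iSup {ι : Sort*} {W : ι → Submodule ℚ (List A → ℚ)}
    (h : ∀ i, InvariantSub (W i)) : InvariantSub (⨆ i, W i) := fun _ hτ u =>
  (iSup_le fun i w hw => Submodule.mem_iSup_of_mem i (h i w hw u) :
    ⨆ i, W i ≤ (⨆ i, W i).comap (shiftOp u)) hτ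

theorem exists_invariantSub_disjoint_sup_eq {ι : Type*} [Finite ι]
    {W : ι → Submodule ℚ (List A → ℚ)} (hinv : ∀ i, InvariantSub (W i))
    (hirr : ∀ i, IrreducibleSub (W i)) {N : Submodule ℚ (List A → ℚ)} (hN : InvariantSub N)
    (hle : N ≤ ⨆ i, W i) :
    ∃ N', InvariantSub N' ∧ Disjoint N N' ∧ N ⊔ N' = ⨆ i, W i := by
  obtain ⟨s, hs⟩ := (Set.toFinite {s : Set ι | Disjoint N (⨆ i ∈ s, W i)}).exists_maximal
    ⟨∅, by simp⟩
  have hinv_s : InvariantSub (⨆ i ∈ s, W i) := .iSup fun i => .iSup fun _ => hinv i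
  refine ⟨_, hinv_s, hs.prop, le_antisymm (sup_le hle (iSup₂_le_iSup _ W)) (iSup_le fun i => ?_)⟩
  rcases (hirr i).2 (W i ⊓ (N ⊔ ⨆ i ∈ s, W i)) inf_le_left ((hinv i).inf (hN.sup hinv_s)) with
    hbot | htop
  · have hinsert : Disjoint N (⨆ j ∈ insert i s, W j) := by
      rw [iSup_insert, sup_comm]
      exact hs.prop.disjoint_sup_right_of_disjoint_sup_left (disjoint_iff.2 hbot).symm
    have hi : i ∈ s := hs.le_of_ge hinsert (Set.subset_insert i s) (Set.mem_insert i s)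
    exact (le_biSup W hi).trans le_sup_right
  · exact inf_eq_left.1 htop

theorem CompletelyReducibleSeries.exists_disjoint_sup_eq (h : CompletelyReducibleSeries σ)
    {N : Submodule ℚ (List A → ℚ)} (hN : InvariantSub N) (hle : N ≤ synSpace σ) :
    ∃ N', InvariantSub N' ∧ Disjoint N N' ∧ N ⊔ N' = synSpace σ := by
  obtain ⟨n, W, hW, -, hsup⟩ := h
  rw [← hsup] at hle ⊢
  exact exists_invariantSub_disjoint_sup_eq (fun i => (hW i).2.1) (fun i => (hW i).2.2) hN hle

/-- The span of the translates `σ · (p u q)`, i.e. the subrepresentation of the syntactic space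
of `σ` that the words having `u` as a factor generate from `σ`. -/
def factorSpan (σ : List A → ℚ) (u : List A) : Submodule ℚ (List A → ℚ) :=
  Submodule.span ℚ (Set.range fun p : List A × List A => shiftOp (p.1 ++ u ++ p.2) σ)

theorem shiftOp_mem_factorSpan (σ : List A → ℚ) (u p q : List A) :
    shiftOp (p ++ u ++ q) σ ∈ factorSpan σ u :=
  Submodule.subset_span ⟨(p, q), rfl⟩

theorem invariantSub_factorSpan (σ : List A → ℚ) (u : List A) : InvariantSub (factorSpan σ u) :=
  invariantSub_span_range fun p v => by
    rw [shiftOp_shiftOp, List.append_assoc (p.1 ++ u)]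
    exact shiftOp_mem_factorSpan σ u p.1 (p.2 ++ v)

theorem factorSpan_le_synSpace (σ : List A → ℚ) (u : List A) : factorSpan σ u ≤ synSpace σ :=
  Submodule.span_mono (Set.range_subset_iff.2 fun p => ⟨p.1 ++ u ++ p.2, rfl⟩)

theorem shiftOp_mem_factorSpan_of_mem {u : List A} {τ : List A → ℚ} (hτ : τ ∈ synSpace σ)
    (p q : List A) : shiftOp (p ++ u ++ q) τ ∈ factorSpan σ u := by
  suffices hle : synSpace σ ≤ (factorSpan σ u).comap (shiftOp (p ++ u ++ q)) from hle hτ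
  refine Submodule.span_le.2 (Set.range_subset_iff.2 fun v => ?_)
  simpa [shiftOp_shiftOp] using shiftOp_mem_factorSpan σ u (v ++ p) q

theorem CompletelyReducibleSeries.exists_mem_factorSpan (h : CompletelyReducibleSeries σ)
    (u : List A) : ∃ τ ∈ factorSpan σ u, ∀ p q, shiftOp (p ++ u ++ q) (σ - τ) = 0 := by
  obtain ⟨N, hN, hdisj, hsup⟩ :=
    h.exists_disjoint_sup_eq (invariantSub_factorSpan σ u) (factorSpan_le_synSpace σ u)
  obtain ⟨τ, hτ, ν, hν, hσ⟩ := Submodule.mem_sup.1 (hsup.ge (self_mem_synSpace σ))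
  refine ⟨τ, hτ, fun p q => ?_⟩
  rw [sub_eq_of_eq_add' hσ.symm]
  exact Submodule.disjoint_def.1 hdisj _
    (shiftOp_mem_factorSpan_of_mem (hsup.le (Submodule.mem_sup_right hν)) p q) (hN ν hν _)

theorem CompletelyReducibleSeries.eq_zero_of_mem_factorSpan (h : CompletelyReducibleSeries σ)
    {u : List A} {τ : List A → ℚ} (hτ : τ ∈ factorSpan σ u)
    (hzero : ∀ p q, shiftOp (p ++ u ++ q) τ = 0) : τ = 0 := by
  let K : Submodule ℚ (List A → ℚ) := ⨅ (p) (q), LinearMap.ker (shiftOp (p ++ u ++ q))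
  have mem_K {κ : List A → ℚ} : κ ∈ K ↔ ∀ p q, shiftOp (p ++ u ++ q) κ = 0 := by
    simp [K, Submodule.mem_iInf]
  have hK : InvariantSub K := fun κ hκ v => mem_K.2 fun p q => by
    simpa [shiftOp_shiftOp] using mem_K.1 hκ (v ++ p) q
  obtain ⟨N, hN, hdisj, hsup⟩ :=
    h.exists_disjoint_sup_eq ((invariantSub_synSpace σ).inf hK) inf_le_left
  obtain ⟨κ, hκ, ν, hν, hσ⟩ := Submodule.mem_sup.1 (hsup.ge (self_mem_synSpace σ))
  -- `σ` and its component in `N` have the same shifts by the words having `u` as a factor.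
  have hfactor : factorSpan σ u ≤ N := by
    refine Submodule.span_le.2 (Set.range_subset_iff.2 fun p => ?_)
    rw [← hσ, map_add, mem_K.1 hκ.2, zero_add]
    exact hN ν hν _
  exact Submodule.disjoint_def.1 hdisj τ
    ⟨factorSpan_le_synSpace σ u hτ, mem_K.2 hzero⟩ (hfactor hτ)

end CompleteReducibility

section Recognition

universe u

variable {A : Type u}

theorem leftQuot_leftQuot (S : Set (List A)) (u v : List A) :
    leftQuot (leftQuot S u) v = leftQuot S (u ++ v) := by
  ext w
  simp [leftQuot]

theorem Recognizable.exists_finite_monoidHom {S : Set (List A)} (h : Recognizable S) :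
    ∃ (M : Type u) (_ : Monoid M) (_ : Finite M) (φ : FreeMonoid A →* M) (f : M → ℚ),
      Function.Surjective φ ∧ ∀ w, charFun S w = f (φ (FreeMonoid.ofList w)) := by
  let Q := Set.range (leftQuot S)
  have : Finite Q := h
  have : Finite (Function.End Q) := inferInstanceAs (Finite (Q → Q))
  have : Finite (Function.End Q)ᵐᵒᵖ := .of_equiv _ MulOpposite.opEquiv
  -- Words act on quotients from the right, hence the opposite monoid.
  let φ : FreeMonoid A →* (Function.End Q)ᵐᵒᵖ :=
    { toFun := fun u => .op fun L => ⟨leftQuot L u.toList, by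
        obtain ⟨_, v, rfl⟩ := L
        exact ⟨v ++ u.toList, (leftQuot_leftQuot S v u.toList).symm⟩⟩
      map_one' := rfl
      map_mul' := fun u v => MulOpposite.unop_injective <| funext fun L =>
        Subtype.ext (leftQuot_leftQuot L u.toList v.toList).symm }
  refine ⟨MonoidHom.mrange φ, inferInstance, inferInstance, φ.mrangeRestrict,
    fun m => charFun (m.1.unop ⟨leftQuot S [], [], rfl⟩ : Q).1 [],
    φ.mrangeRestrict_surjective, fun w =>
      congrArg (charFun S) (List.append_nil w).symm⟩

variable {M : Type*} [Monoid M] {φ : FreeMonoid A →* M}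

theorem factorSpan_eq_map_idealSpan {σ : List A → ℚ} {f : M → ℚ} (hφ : Function.Surjective φ)
    (hf : ∀ w, σ w = f (φ (FreeMonoid.ofList w))) (u : List A) :
    factorSpan σ u = (idealSpan f (φ (FreeMonoid.ofList u))).map
      (LinearMap.funLeft ℚ ℚ fun w => φ (FreeMonoid.ofList w)) := by
  have hpair : Function.Surjective fun p : List A × List A =>
      (φ (FreeMonoid.ofList p.1), φ (FreeMonoid.ofList p.2)) := hφ.prodMap hφ
  rw [factorSpan, idealSpan, Submodule.map_span, ← Set.range_comp, ← hpair.range_comp]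
  congr! 3
  ext w
  simp [shiftOp, hf, mul_assoc]

theorem CompletelyReducibleSeries.exists_mem_idealSpan {σ : List A → ℚ} {f : M → ℚ}
    (h : CompletelyReducibleSeries σ) (hφ : Function.Surjective φ)
    (hf : ∀ w, σ w = f (φ (FreeMonoid.ofList w))) (e : M) :
    ∃ g ∈ idealSpan f e, ∀ m x, f (m * e * x) = g (m * e * x) := by
  obtain ⟨u, rfl⟩ := hφ e
  obtain ⟨τ, hτ, hzero⟩ := h.exists_mem_factorSpan u.toList
  rw [factorSpan_eq_map_idealSpan hφ hf] at hτ
  obtain ⟨g, hg, rfl⟩ := hτ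
  refine ⟨g, hg, fun m x => ?_⟩
  obtain ⟨p, rfl⟩ := hφ m
  obtain ⟨q, rfl⟩ := hφ x
  simpa [shiftOp, hf, mul_assoc, sub_eq_zero] using
    congrFun (hzero p.toList q.toList) []

theorem CompletelyReducibleSeries.eq_zero_of_mem_idealSpan {σ : List A → ℚ} {f : M → ℚ}
    (h : CompletelyReducibleSeries σ) (hφ : Function.Surjective φ)
    (hf : ∀ w, σ w = f (φ (FreeMonoid.ofList w))) {e : M} {g : M → ℚ} (hg : g ∈ idealSpan f e)
    (hzero : ∀ m x, g (m * e * x) = 0) : g = 0 := by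
  obtain ⟨u, rfl⟩ := hφ e
  have hτ := h.eq_zero_of_mem_factorSpan (u := u.toList)
    (factorSpan_eq_map_idealSpan hφ hf _ ▸ Submodule.mem_map_of_mem hg)
    fun p q => funext fun w => by
      simpa [shiftOp, mul_assoc] using
        hzero (φ (FreeMonoid.ofList p)) (φ (FreeMonoid.ofList (q ++ w)))
  exact LinearMap.funLeft_injective_of_surjective ℚ ℚ _ hφ (hτ.trans (map_zero _).symm)

theorem charFun_le_charFun {S : Set (List A)} {v w : List A} (h : v ∈ S → w ∈ S) :
    charFun S v ≤ charFun S w := by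
  by_cases hv : v ∈ S <;> by_cases hw : w ∈ S <;> simp_all [charFun]

theorem mem_iff_of_charFun_eq {S : Set (List A)} {v w : List A}
    (h : charFun S v = charFun S w) : v ∈ S ↔ w ∈ S := by
  by_cases hv : v ∈ S <;> by_cases hw : w ∈ S <;> simp_all [charFun]

section StableSubmonoid

variable {X : Set (List A)} {f : M → ℚ} [Finite M]

theorem append_append_mem_star_iff_left (hcr : CompletelyReducibleLang (star X))
    (hφ : Function.Surjective φ) (hf : ∀ w, charFun (star X) w = f (φ (FreeMonoid.ofList w)))
    {u : List A} (hu : u ∈ star X) (he : IsMinimalIdempotent (φ (FreeMonoid.ofList u)))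
    (w : List A) : u ++ w ++ u ∈ star X ↔ w ++ u ∈ star X := by
  refine mem_iff_of_charFun_eq ?_
  have hle (x : M) : f x ≤ f (φ (FreeMonoid.ofList u) * x) := by
    obtain ⟨v, rfl⟩ := hφ x
    simpa [hf] using charFun_le_charFun (v := v.toList) (append_mem_star hu)
  simpa [hf, mul_assoc] using he.apply_mul_mul_eq_of_le_left (hcr.exists_mem_idealSpan hφ hf _) hle
    (φ (FreeMonoid.ofList w))

theorem append_append_mem_star_iff_right (hcr : CompletelyReducibleLang (star X))
    (hφ : Function.Surjective φ) (hf : ∀ w, charFun (star X) w = f (φ (FreeMonoid.ofList w)))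
    {u : List A} (hu : u ∈ star X) (he : IsMinimalIdempotent (φ (FreeMonoid.ofList u)))
    (w : List A) : u ++ w ++ u ∈ star X ↔ u ++ w ∈ star X := by
  refine mem_iff_of_charFun_eq ?_
  have hle (x : M) : f x ≤ f (x * φ (FreeMonoid.ofList u)) := by
    obtain ⟨v, rfl⟩ := hφ x
    simpa [hf] using charFun_le_charFun (v := v.toList) fun hv => append_mem_star hv hu
  simpa [hf, mul_assoc] using he.apply_mul_mul_eq_of_le_right
    (fun _ hg => hcr.eq_zero_of_mem_idealSpan hφ hf hg) hle (φ (FreeMonoid.ofList w))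

theorem exists_isMinimalIdempotent_of_langDense (hdense : LangDense (star X))
    (hφ : Function.Surjective φ) {x : List A} (hx : x ∈ star X) :
    ∃ p ∈ star X, ∃ q ∈ star X, x ++ p = q ++ x ∧
      IsMinimalIdempotent (φ (FreeMonoid.ofList (x ++ p))) := by
  obtain ⟨k, hk⟩ := exists_forall_isMinimalIdempotent_pow_succ M
  obtain ⟨v, rfl⟩ := hφ k
  obtain ⟨a, b, hab⟩ := hdense v.toList
  obtain ⟨n, hn⟩ := hk (φ (FreeMonoid.ofList (x ++ a))) (φ (FreeMonoid.ofList (b ++ x)))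
  set c := a ++ v.toList ++ b
  have hpow : φ (FreeMonoid.ofList (x ++ a)) * φ v * φ (FreeMonoid.ofList (b ++ x)) =
      φ (FreeMonoid.ofList (x ++ c ++ x)) := by
    simp [c, mul_assoc]
  have hrep := flatten_replicate_mem_star (append_mem_star (append_mem_star hx hab) hx) n
  refine ⟨c ++ x ++ (List.replicate n (x ++ c ++ x)).flatten,
    append_mem_star (append_mem_star hab hx) hrep,
    (List.replicate n (x ++ c ++ x)).flatten ++ (x ++ c),
    append_mem_star hrep (append_mem_star hx hab), ?_, ?_⟩
  · have hcomm := congrArg List.flatten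
      ((List.replicate_succ (n := n) (a := x ++ c ++ x)).symm.trans List.replicate_succ')
    simpa using hcomm
  · rw [hpow, pow_succ'] at hn
    simpa [FreeMonoid.ofList_flatten, mul_assoc] using hn

end StableSubmonoid

end Recognition

end Birec

theorem maximal_code_completelyReducible_bifix_general {A : Type*} {X : Set (List A)}
    (hX : IsCode X) (hrec : Recognizable (star X)) (hdense : LangDense (star X))
    (hcr : CompletelyReducibleLang (star X)) : IsBifixCode X := by
  obtain ⟨M, _, _, φ, f, hφ, hf⟩ := hrec.exists_finite_monoidHom
  constructor
  · refine hX.isPrefixCode fun x hx w hxw => ?_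
    obtain ⟨p, hp, q, hq, hpq, he⟩ := exists_isMinimalIdempotent_of_langDense hdense hφ hx
    have hu : x ++ p ∈ star X := append_mem_star hx hp
    have huw : x ++ p ++ w ∈ star X := by simpa [hpq] using append_mem_star hq hxw
    exact hX.mem_star_of_append hu huw
      ((append_append_mem_star_iff_left hcr hφ hf hu he w).1 (append_mem_star huw hu))
  · refine hX.isSuffixCode fun x hx w hwx => ?_
    obtain ⟨p, hp, -, -, -, he⟩ := exists_isMinimalIdempotent_of_langDense hdense hφ hx
    have hu : x ++ p ∈ star X := append_mem_star hx hp
    have hwu : w ++ (x ++ p) ∈ star X := by simpa using append_mem_star hwx hp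
    exact hX.mem_star_of_append hu ((append_append_mem_star_iff_right hcr hφ hf hu he w).1
      (by simpa using append_mem_star hu hwu)) hwu

/-- **Corollary (Reutenauer).** Let `X` be a recognizable maximal code.  If `X*` is
completely reducible over `ℚ`, then `X` is a bifix code. -/
theorem maximal_code_completelyReducible_bifix {A : Type*} [Fintype A]
    (X : Set (List A)) (hrec : Recognizable X) (hmax : IsMaximalCode X)
    (hcr : CompletelyReducibleLang (star X)) :
    IsBifixCode X :=
  maximal_code_completelyReducible_bifix_general hmax.1 hrec.recognizable_star
    hmax.langDense_star hcr
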